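/- Let ρ be a log-concave probability density on ℝⁿ and let 0 < δ < 1. Let ν_δ be the probability measure on ℝⁿ whose density e^{−ψ_δ} is proportional to (ρ * γ_δ)(x) · e^{−δ|x|²/2}, where γ_δ is the centered Gaussian density with covariance δ·Id and * denotes convolution. Then e^{−ψ_δ} is smooth and positive on ℝⁿ and for every x ∈ ℝⁿ, δ·Id ≤ ∇²ψ_δ(x) ≤ (δ + 1/δ)·Id in the sense of symmetric matrices. -/

import Mathlib

open MeasureTheory Real
open scoped ENNReal RealInnerProductSpace

noncomputable section

abbrev Euc (n : ℕ) := EuclideanSpace ℝ (Fin n)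

/-- A nonnegative function `g` is log-concave: `g(ax+by) ≥ g(x)^a g(y)^b`. -/
def IsLogConcaveFun {n : ℕ} (g : Euc n → ℝ) : Prop :=
  (∀ x, 0 ≤ g x) ∧
  ∀ x y : Euc n, ∀ a b : ℝ, 0 ≤ a → 0 ≤ b → a + b = 1 →
    g x ^ a * g y ^ b ≤ g (a • x + b • y)

def IsLogConcaveMeasure {n : ℕ} (μ : Measure (Euc n)) : Prop :=
  ∃ ρ : Euc n → ℝ, Measurable ρ ∧ IsLogConcaveFun ρ ∧
    μ = volume.withDensity (fun x => ENNReal.ofReal (ρ x))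

def poincareSet {n : ℕ} (μ : Measure (Euc n)) : Set ℝ :=
  {C : ℝ | 0 ≤ C ∧ ∀ f : Euc n → ℝ, LocallyLipschitz f →
    Integrable (fun x => ‖gradient f x‖ ^ 2) μ →
    ∫ x, f x ^ 2 ∂μ - (∫ x, f x ∂μ) ^ 2 ≤ C * ∫ x, ‖gradient f x‖ ^ 2 ∂μ}

def poincareConst {n : ℕ} (μ : Measure (Euc n)) : ℝ := sInf (poincareSet μ)

def covMatrix {n : ℕ} (μ : Measure (Euc n)) : Matrix (Fin n) (Fin n) ℝ :=
  Matrix.of fun i j => ∫ x, x i * x j ∂μ - (∫ x, x i ∂μ) * (∫ x, x j ∂μ)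

def opNorm {n : ℕ} (M : Matrix (Fin n) (Fin n) ℝ) : ℝ :=
  ‖Matrix.toEuclideanCLM (𝕜 := ℝ) M‖

def IsIsotropic {n : ℕ} (μ : Measure (Euc n)) : Prop :=
  (∫ x, x ∂μ) = 0 ∧ ∀ i j, ∫ x, x i * x j ∂μ = if i = j then 1 else 0

def UniformlyLogConcave {n : ℕ} (t : ℝ) (μ : Measure (Euc n)) : Prop :=
  ∃ g : Euc n → ℝ, Measurable g ∧ IsLogConcaveFun g ∧
    μ = volume.withDensity (fun x => ENNReal.ofReal (Real.exp (-t * ‖x‖ ^ 2 / 2) * g x))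

def IsRegularPotential {n : ℕ} (ψ : Euc n → ℝ) : Prop :=
  ContDiff ℝ (⊤ : ℕ∞) ψ ∧
  (∃ ε : ℝ, 0 < ε ∧ ∀ x v : Euc n,
    ε * ‖v‖ ^ 2 ≤ iteratedFDeriv ℝ 2 ψ x ![v, v] ∧
    iteratedFDeriv ℝ 2 ψ x ![v, v] ≤ ε⁻¹ * ‖v‖ ^ 2) ∧
  (∀ m : ℕ, ∃ C : ℝ, ∃ k : ℕ, ∀ x, ‖iteratedFDeriv ℝ m ψ x‖ ≤ C * (1 + ‖x‖) ^ k)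

def IsRegularMeasure {n : ℕ} (μ : Measure (Euc n)) (ψ : Euc n → ℝ) : Prop :=
  IsRegularPotential ψ ∧ μ = volume.withDensity (fun x => ENNReal.ofReal (Real.exp (-ψ x)))

def IsTempered {n : ℕ} (ρ : Euc n → ℝ) (f : Euc n → ℝ) : Prop :=
  ContDiff ℝ (⊤ : ℕ∞) f ∧ ∀ m : ℕ, ∃ C : ℝ, 0 < C ∧ ∃ a : ℝ, 0 < a ∧ ∀ x,
    ‖iteratedFDeriv ℝ m f x‖ ≤ C / Real.sqrt (ρ x) * Real.exp (-a * ‖x‖)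

def lap {n : ℕ} (f : Euc n → ℝ) (x : Euc n) : ℝ :=
  ∑ i, iteratedFDeriv ℝ 2 f x ![EuclideanSpace.single i (1:ℝ), EuclideanSpace.single i (1:ℝ)]

def Lop {n : ℕ} (ψ u : Euc n → ℝ) (x : Euc n) : ℝ :=
  lap u x - ⟪gradient ψ x, gradient u x⟫

def gaussDensity (n : ℕ) (s : ℝ) (x : Euc n) : ℝ :=
  (2 * π * s) ^ (-(n : ℝ) / 2) * Real.exp (-‖x‖ ^ 2 / (2 * s))

def gaussMeasure (n : ℕ) (s : ℝ) : Measure (Euc n) :=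
  volume.withDensity fun x => ENNReal.ofReal (gaussDensity n s x)

def tiltZ {n : ℕ} (ρ : Euc n → ℝ) (t : ℝ) (θ : Euc n) : ℝ :=
  ∫ x, Real.exp (⟪θ, x⟫ - t * ‖x‖ ^ 2 / 2) * ρ x

def tiltDensity {n : ℕ} (ρ : Euc n → ℝ) (t : ℝ) (θ : Euc n) (x : Euc n) : ℝ :=
  Real.exp (⟪θ, x⟫ - t * ‖x‖ ^ 2 / 2) * ρ x / tiltZ ρ t θ

def tiltMeasure {n : ℕ} (ρ : Euc n → ℝ) (t : ℝ) (θ : Euc n) : Measure (Euc n) :=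
  volume.withDensity fun x => ENNReal.ofReal (tiltDensity ρ t θ x)

def varD {n : ℕ} (p : Euc n → ℝ) (f : Euc n → ℝ) : ℝ :=
  (∫ x, f x ^ 2 * p x) - (∫ x, f x * p x) ^ 2

end

/-! ### Prékopa–Leindler (midpoint form) -/

lemma bm_sup_compact {A : Set ℝ} (hA : MeasurableSet A) (hne : A.Nonempty) (c d : ℝ≥0∞)
    (h : ∀ K ⊆ A, IsCompact K → K.Nonempty → volume K + c ≤ d) : volume A + c ≤ d := by
  obtain ⟨a, ha⟩ := hne
  have hcd : c ≤ d := by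
    have := h {a} (by simpa using ha) isCompact_singleton (Set.singleton_nonempty a)
    simpa using this
  by_cases hc : c = ∞
  · subst hc
    simpa using hcd
  refine add_le_of_le_tsub_right_of_le hcd ?_
  refine le_of_forall_lt fun r hr => ?_
  obtain ⟨K, hKA, hK, hrK⟩ := hA.exists_lt_isCompact hr
  have hKne : K.Nonempty := by
    rw [Set.nonempty_iff_ne_empty]
    rintro rfl
    simp at hrK
  exact hrK.trans_le (ENNReal.le_sub_of_add_le_right hc (h K hKA hK hKne))

lemma bm_compact {K L D : Set ℝ} (hK : IsCompact K) (hL : IsCompact L) (hKn : K.Nonempty)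
    (hLn : L.Nonempty) (hD : ∀ x ∈ K, ∀ y ∈ L, x + y ∈ D) : volume K + volume L ≤ volume D := by
  have hm := hK.sSup_mem hKn
  have hl := hL.sInf_mem hLn
  set m := sSup K with hmdef
  set l := sInf L with hldef
  have h1 : volume ((fun x => l + x) '' K) = volume K := by
    rw [Set.image_add_left, measure_preimage_add]
  have h2 : volume ((fun x => m + x) '' L) = volume L := by
    rw [Set.image_add_left, measure_preimage_add]
  have hLm : MeasurableSet ((fun x => m + x) '' L) :=
    (hL.image (by fun_prop)).measurableSet
  have h3 := measure_union_add_inter (μ := volume) ((fun x => l + x) '' K) hLm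
  have h4 : volume (((fun x => l + x) '' K) ∩ ((fun x => m + x) '' L)) = 0 := by
    refine measure_mono_null (t := {m + l}) ?_ (by simp)
    rintro _ ⟨⟨x, hx, rfl⟩, ⟨y, hy, hxy⟩⟩
    have hx' : x ≤ m := le_csSup hK.bddAbove hx
    have hy' : l ≤ y := csInf_le hL.bddBelow hy
    simp only [Set.mem_singleton_iff] at *
    linarith
  rw [h4, add_zero, h1, h2] at h3
  rw [← h3]
  refine measure_mono ?_
  rintro _ (⟨x, hx, rfl⟩ | ⟨y, hy, rfl⟩)
  · have := hD x hx l hl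
    simpa [add_comm] using this
  · exact hD m hm y hy

lemma bm_one {A B C : Set ℝ} (hA : MeasurableSet A) (hB : MeasurableSet B) (hAn : A.Nonempty)
    (hBn : B.Nonempty) (hC : ∀ x ∈ A, ∀ y ∈ B, (2:ℝ)⁻¹ * (x + y) ∈ C) :
    volume A + volume B ≤ 2 * volume C := by
  have hD : volume ((fun x => (2:ℝ)⁻¹ * x) ⁻¹' C) = 2 * volume C := by
    rw [Real.volume_preimage_mul_left (by norm_num)]
    norm_num
  rw [← hD]
  refine bm_sup_compact hA hAn _ _ fun K hKA hK hKn => ?_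
  rw [add_comm]
  refine bm_sup_compact hB hBn _ _ fun L hLB hL hLn => ?_
  rw [add_comm]
  exact bm_compact hK hL hKn hLn fun x hx y hy => hC x (hKA hx) y (hLB hy)

lemma pl_layer {f g h : ℝ → ℝ} (hf : Measurable f) (hg : Measurable g) (hh : Measurable h)
    (hf0 : ∀ x, 0 ≤ f x) (hg0 : ∀ x, 0 ≤ g x) (hh0 : ∀ x, 0 ≤ h x)
    (hf1 : ∀ x, f x ≤ 1) (hg1 : ∀ x, g x ≤ 1)
    (hfs : ∀ t < 1, ∃ x, t < f x) (hgs : ∀ t < 1, ∃ x, t < g x)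
    (H : ∀ t x y, 0 < t → t < f x → t < g y → t < h ((2:ℝ)⁻¹ * (x + y))) :
    (∫⁻ x, ENNReal.ofReal (f x)) + (∫⁻ x, ENNReal.ofReal (g x))
      ≤ 2 * ∫⁻ x, ENNReal.ofReal (h x) := by
  rw [lintegral_eq_lintegral_meas_lt _ (.of_forall hf0) hf.aemeasurable,
    lintegral_eq_lintegral_meas_lt _ (.of_forall hg0) hg.aemeasurable,
    lintegral_eq_lintegral_meas_lt _ (.of_forall hh0) hh.aemeasurable,
    ← lintegral_const_mul' _ _ (by norm_num)]
  refine (le_lintegral_add _ _).trans ?_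
  refine setLIntegral_mono' measurableSet_Ioi fun t ht => ?_
  rcases lt_or_ge t 1 with h1 | h1
  · exact bm_one (measurableSet_lt measurable_const hf) (measurableSet_lt measurable_const hg)
      (hfs t h1) (hgs t h1) fun x hx y hy => H t x y ht hx hy
  · have e1 : {a | t < f a} = ∅ := by
      ext a; simpa using (hf1 a).trans h1
    have e2 : {a | t < g a} = ∅ := by
      ext a; simpa using (hg1 a).trans h1
    simp [e1, e2]

lemma pl_four_mul (a b c : ℝ≥0∞) (h : a + b ≤ 2 * c) : a * b ≤ c ^ 2 := by
  by_cases hc : c = ∞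
  · subst hc; simp
  have hab : a + b ≠ ∞ := ne_top_of_le_ne_top (by finiteness) h
  have ha : a ≠ ∞ := fun h => hab (by simp [h])
  have hb : b ≠ ∞ := fun h => hab (by simp [h])
  lift a to NNReal using ha
  lift b to NNReal using hb
  lift c to NNReal using hc
  norm_cast at h ⊢
  have h' : (a:ℝ) + b ≤ 2 * c := by exact_mod_cast h
  have : (a:ℝ) * b ≤ c ^ 2 := by
    nlinarith [sq_nonneg ((a:ℝ) - b), a.coe_nonneg, b.coe_nonneg, c.coe_nonneg]
  exact_mod_cast this

lemma pl_bdd {f g h : ℝ → ℝ≥0∞} (hf : Measurable f) (hg : Measurable g) (hh : Measurable h)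
    (N : ℕ) (hfN : ∀ x, f x ≤ N) (hgN : ∀ x, g x ≤ N)
    (H : ∀ x y, f x * g y ≤ h ((2:ℝ)⁻¹ * (x + y)) ^ 2) :
    (∫⁻ x, f x) * (∫⁻ x, g x) ≤ (∫⁻ x, h x) ^ 2 := by
  set F := ⨆ x, f x with hF
  set G := ⨆ x, g x with hG
  have hFt : F ≠ ∞ := ne_top_of_le_ne_top (ENNReal.natCast_ne_top N) (iSup_le hfN)
  have hGt : G ≠ ∞ := ne_top_of_le_ne_top (ENNReal.natCast_ne_top N) (iSup_le hgN)
  have hfF : ∀ x, f x ≤ F := fun x => le_iSup f x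
  have hgG : ∀ x, g x ≤ G := fun x => le_iSup g x
  by_cases hF0 : F = 0
  · have : ∀ x, f x = 0 := fun x => by simpa [hF0] using hfF x
    simp [this]
  by_cases hG0 : G = 0
  · have : ∀ x, g x = 0 := fun x => by simpa [hG0] using hgG x
    simp [this]
  have hfx : ∀ x, f x ≠ ∞ := fun x => ne_top_of_le_ne_top hFt (hfF x)
  have hgx : ∀ x, g x ≠ ∞ := fun x => ne_top_of_le_ne_top hGt (hgG x)
  obtain ⟨s, hs⟩ : ∃ s : ℝ, s = √(F.toReal * G.toReal) := ⟨_, rfl⟩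
  have hFp : 0 < F.toReal := ENNReal.toReal_pos hF0 hFt
  have hGp : 0 < G.toReal := ENNReal.toReal_pos hG0 hGt
  have hsp : 0 < s := by rw [hs]; positivity
  have hs2 : s ^ 2 = F.toReal * G.toReal := by rw [hs]; exact Real.sq_sqrt (by positivity)
  have hk : ∀ x, min (h x) (ENNReal.ofReal s) ≠ ∞ := fun x => by simp
  have key := pl_layer (f := fun x => (f x).toReal / F.toReal)
    (g := fun x => (g x).toReal / G.toReal)
    (h := fun x => (min (h x) (ENNReal.ofReal s)).toReal / s)
    (by fun_prop) (by fun_prop) (by fun_prop)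
    (fun x => by positivity) (fun x => by positivity) (fun x => by positivity)
    (fun x => by rw [div_le_one hFp]; exact ENNReal.toReal_mono hFt (hfF x))
    (fun x => by rw [div_le_one hGp]; exact ENNReal.toReal_mono hGt (hgG x))
    (by
      intro t ht
      rcases lt_or_ge t 0 with h0 | h0
      · exact ⟨0, h0.trans_le (by positivity)⟩
      have : ENNReal.ofReal (t * F.toReal) < F := by
        rw [ENNReal.ofReal_lt_iff_lt_toReal (by positivity) hFt]
        nlinarith
      obtain ⟨x, hx⟩ := lt_iSup_iff.1 this
      refine ⟨x, ?_⟩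
      rw [lt_div_iff₀ hFp]
      exact (ENNReal.ofReal_lt_iff_lt_toReal (by positivity) (hfx x)).1 hx)
    (by
      intro t ht
      rcases lt_or_ge t 0 with h0 | h0
      · exact ⟨0, h0.trans_le (by positivity)⟩
      have : ENNReal.ofReal (t * G.toReal) < G := by
        rw [ENNReal.ofReal_lt_iff_lt_toReal (by positivity) hGt]
        nlinarith
      obtain ⟨x, hx⟩ := lt_iSup_iff.1 this
      refine ⟨x, ?_⟩
      rw [lt_div_iff₀ hGp]
      exact (ENNReal.ofReal_lt_iff_lt_toReal (by positivity) (hgx x)).1 hx)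
    (by
      intro t x y ht hx hy
      rw [lt_div_iff₀ hFp] at hx
      rw [lt_div_iff₀ hGp] at hy
      have hxF : (f x).toReal ≤ F.toReal := ENNReal.toReal_mono hFt (hfF x)
      have ht1 : t < 1 := by
        by_contra hcon
        push Not at hcon
        nlinarith
      rw [lt_div_iff₀ hsp]
      rw [← ENNReal.ofReal_lt_iff_lt_toReal (by positivity) (hk _)]
      refine lt_min ?_ ?_
      · have hH := H x y
        by_contra hcon
        push Not at hcon
        have h1 : f x * g y ≤ ENNReal.ofReal (t * s) ^ 2 := hH.trans (by gcongr)
        have h2 : (f x * g y).toReal ≤ (ENNReal.ofReal (t * s) ^ 2).toReal :=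
          ENNReal.toReal_mono (by finiteness) h1
        rw [ENNReal.toReal_mul, ENNReal.toReal_pow, ENNReal.toReal_ofReal (by positivity)] at h2
        have h3 : (t * F.toReal) * (t * G.toReal) < (f x).toReal * (g y).toReal := by
          apply mul_lt_mul'' hx hy <;> positivity
        rw [mul_pow, hs2] at h2
        nlinarith
      · rw [ENNReal.ofReal_lt_ofReal_iff hsp]
        nlinarith)
  have c1 : ∫⁻ x, ENNReal.ofReal ((f x).toReal / F.toReal) = (∫⁻ x, f x) / F := by
    rw [div_eq_mul_inv, ← lintegral_mul_const _ hf]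
    refine lintegral_congr fun x => ?_
    rw [ENNReal.ofReal_div_of_pos hFp, ENNReal.ofReal_toReal hFt, ENNReal.ofReal_toReal (hfx x),
      div_eq_mul_inv]
  have c2 : ∫⁻ x, ENNReal.ofReal ((g x).toReal / G.toReal) = (∫⁻ x, g x) / G := by
    rw [div_eq_mul_inv, ← lintegral_mul_const _ hg]
    refine lintegral_congr fun x => ?_
    rw [ENNReal.ofReal_div_of_pos hGp, ENNReal.ofReal_toReal hGt, ENNReal.ofReal_toReal (hgx x),
      div_eq_mul_inv]
  have c3 : ∫⁻ x, ENNReal.ofReal ((min (h x) (ENNReal.ofReal s)).toReal / s)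
      ≤ (∫⁻ x, h x) / ENNReal.ofReal s := by
    rw [div_eq_mul_inv, ← lintegral_mul_const _ hh]
    refine lintegral_mono fun x => ?_
    rw [ENNReal.ofReal_div_of_pos hsp, ENNReal.ofReal_toReal (hk x), div_eq_mul_inv]
    gcongr
    exact min_le_left _ _
  rw [c1, c2] at key
  have key2 := pl_four_mul _ _ _ (key.trans (mul_le_mul_right c3 2))
  have hS2 : ENNReal.ofReal s ^ 2 = F * G := by
    rw [← ENNReal.ofReal_pow hsp.le, hs2, ENNReal.ofReal_mul hFp.le, ENNReal.ofReal_toReal hFt,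
      ENNReal.ofReal_toReal hGt]
  have hS0 : ENNReal.ofReal s ≠ 0 := by simpa using hsp
  calc (∫⁻ x, f x) * (∫⁻ x, g x)
      = ((∫⁻ x, f x) / F * F) * ((∫⁻ x, g x) / G * G) := by
        rw [ENNReal.div_mul_cancel hF0 hFt, ENNReal.div_mul_cancel hG0 hGt]
    _ = ((∫⁻ x, f x) / F * ((∫⁻ x, g x) / G)) * (F * G) := by ring
    _ ≤ ((∫⁻ x, h x) / ENNReal.ofReal s) ^ 2 * (F * G) := by gcongr
    _ = ((∫⁻ x, h x) / ENNReal.ofReal s * ENNReal.ofReal s) ^ 2 := by rw [← hS2]; ring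
    _ = _ := by rw [ENNReal.div_mul_cancel hS0 ENNReal.ofReal_ne_top]

lemma pl_trunc {f : ℝ → ℝ≥0∞} (hf : Measurable f) :
    ∫⁻ x, f x = ⨆ N : ℕ, ∫⁻ x, min (f x) N := by
  rw [← lintegral_iSup (fun N => by fun_prop)]
  · refine lintegral_congr fun x => ?_
    have : min (f x) (⨆ N : ℕ, (N : ℝ≥0∞)) = ⨆ N : ℕ, min (f x) N := inf_iSup_eq _ _
    rw [← this, ENNReal.iSup_natCast]; simp
  · intro a b hab x
    simp only
    gcongr

/-- The midpoint Prékopa–Leindler property of a measure space with a real vector space structure. -/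
def PLProp (E : Type) [AddCommGroup E] [Module ℝ E] [MeasureSpace E] : Prop :=
  ∀ f g h : E → ℝ≥0∞, Measurable f → Measurable g → Measurable h →
    (∀ x y, f x * g y ≤ h ((2:ℝ)⁻¹ • (x + y)) ^ 2) →
    (∫⁻ x, f x) * (∫⁻ x, g x) ≤ (∫⁻ x, h x) ^ 2

lemma pl_real : PLProp ℝ := by
  intro f g h hf hg hh H
  rw [pl_trunc hf, pl_trunc hg, ENNReal.iSup_mul]
  refine iSup_le fun M => ?_
  rw [ENNReal.mul_iSup]
  refine iSup_le fun N => ?_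
  refine pl_bdd (by fun_prop) (by fun_prop) hh (M + N) (fun x => (min_le_right _ _).trans ?_)
    (fun x => (min_le_right _ _).trans ?_) fun x y => ?_
  · exact_mod_cast Nat.le_add_right M N
  · exact_mod_cast Nat.le_add_left N M
  · exact (mul_le_mul' (min_le_left _ _) (min_le_left _ _)).trans (H x y)

lemma pl_prod {E F : Type} [AddCommGroup E] [Module ℝ E] [MeasureSpace E]
    [AddCommGroup F] [Module ℝ F] [MeasureSpace F] [SFinite (volume : Measure E)]
    [SFinite (volume : Measure F)] (hE : PLProp E) (hF : PLProp F) : PLProp (E × F) := by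
  intro f g h hf hg hh H
  rw [Measure.volume_eq_prod, lintegral_prod _ hf.aemeasurable, lintegral_prod _ hg.aemeasurable,
    lintegral_prod _ hh.aemeasurable]
  refine hE _ _ _ hf.lintegral_prod_right' hg.lintegral_prod_right' hh.lintegral_prod_right' ?_
  intro x y
  refine hF _ _ _ (by fun_prop) (by fun_prop) (by fun_prop) ?_
  intro s t
  exact H (x, s) (y, t)

lemma pl_transfer {E F : Type} [AddCommGroup E] [Module ℝ E] [MeasureSpace E]
    [AddCommGroup F] [Module ℝ F] [MeasureSpace F] (e : E ≃ᵐ F)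
    (he : MeasurePreserving e volume volume)
    (hlin : ∀ x y, e.symm ((2:ℝ)⁻¹ • (x + y)) = (2:ℝ)⁻¹ • (e.symm x + e.symm y))
    (hF : PLProp F) : PLProp E := by
  intro f g h hf hg hh H
  have hs : MeasurePreserving e.symm volume volume := he.symm e
  rw [← hs.lintegral_comp_emb e.symm.measurableEmbedding f,
    ← hs.lintegral_comp_emb e.symm.measurableEmbedding g,
    ← hs.lintegral_comp_emb e.symm.measurableEmbedding h]
  refine hF _ _ _ (by fun_prop) (by fun_prop) (by fun_prop) ?_
  intro x y
  rw [hlin]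
  exact H _ _

lemma pl_pi : ∀ n : ℕ, PLProp (Fin n → ℝ)
  | 0 => by
    intro f g h hf hg hh H
    rw [volume_pi, Measure.pi_of_empty (x := 0)]
    rw [lintegral_dirac, lintegral_dirac, lintegral_dirac]
    convert H 0 0

  | n + 1 => by
    refine pl_transfer (MeasurableEquiv.piFinSuccAbove (fun _ => ℝ) 0)
      (volume_preserving_piFinSuccAbove (fun _ => ℝ) 0) ?_ (pl_prod pl_real (pl_pi n))
    intro x y
    rw [MeasurableEquiv.symm_apply_eq]
    ext i <;> simp [MeasurableEquiv.piFinSuccAbove, Fin.tail, Fin.consEquiv]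

lemma pl_euc (n : ℕ) : PLProp (Euc n) :=
  pl_transfer (MeasurableEquiv.toLp 2 (Fin n → ℝ)).symm
    (EuclideanSpace.volume_preserving_symm_measurableEquiv_toLp (Fin n)) (fun _ _ => rfl)
    (pl_pi n)

/-! ### Smoothness of Laplace transforms -/

lemma laplace_norm_bound {E F : Type} [NormedAddCommGroup E] [InnerProductSpace ℝ E]
    [NormedAddCommGroup F] [NormedSpace ℝ F]
    (R : ℝ) (x y : E) (w : F) (hx : ‖x‖ ≤ R) :
    ‖Real.exp (inner ℝ x y) • w‖ ≤ Real.exp (R * ‖y‖) * ‖w‖ := by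
  rw [norm_smul, Real.norm_eq_abs, Real.abs_exp]
  gcongr
  exact (real_inner_le_norm x y).trans (by gcongr)

lemma laplace_contDiff_nat {E : Type} [NormedAddCommGroup E] [InnerProductSpace ℝ E]
    [FiniteDimensional ℝ E] [MeasurableSpace E] [BorelSpace E] (μ : Measure E) (m : ℕ) :
    ∀ {F : Type} [NormedAddCommGroup F] [NormedSpace ℝ F] (f : E → F),
      AEStronglyMeasurable f μ →
      (∀ R : ℝ, Integrable (fun y => Real.exp (R * ‖y‖) * ‖f y‖) μ) →
      ContDiff ℝ m (fun x => ∫ y, Real.exp (inner ℝ x y) • f y ∂μ) := by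
  have key : ∀ {F : Type} [NormedAddCommGroup F] [NormedSpace ℝ F] (f : E → F),
      AEStronglyMeasurable f μ →
      (∀ R : ℝ, Integrable (fun y => Real.exp (R * ‖y‖) * ‖f y‖) μ) →
      AEStronglyMeasurable (fun y => (innerSL ℝ y).smulRight (f y)) μ ∧
      (∀ R : ℝ, Integrable (fun y => Real.exp (R * ‖y‖) * ‖(innerSL ℝ y).smulRight (f y)‖) μ) ∧
      ∀ x, HasFDerivAt (fun x => ∫ y, Real.exp (inner ℝ x y) • f y ∂μ)
        (∫ y, Real.exp (inner ℝ x y) • (innerSL ℝ y).smulRight (f y) ∂μ) x := by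
    intro F _ _ f hf hR
    have hmeas : AEStronglyMeasurable (fun y => (innerSL ℝ y).smulRight (f y)) μ := by
      have h1 : AEStronglyMeasurable (fun y : E => innerSL ℝ y) μ :=
        (innerSL ℝ (E := E)).continuous.aestronglyMeasurable
      have := ((ContinuousLinearMap.smulRightL ℝ E F).continuous₂).comp_aestronglyMeasurable₂ h1 hf
      simpa using this
    have hIntg : ∀ R : ℝ,
        Integrable (fun y => Real.exp (R * ‖y‖) * ‖(innerSL ℝ y).smulRight (f y)‖) μ := by
      intro R
      refine (hR (R + 1)).mono' ?_ (.of_forall fun y => ?_)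
      · exact ((by fun_prop : Continuous fun y : E => Real.exp (R * ‖y‖)).aestronglyMeasurable).mul
          hmeas.norm
      · rw [Real.norm_of_nonneg (by positivity), ContinuousLinearMap.norm_smulRight_apply,
          innerSL_apply_norm, add_mul, Real.exp_add, mul_assoc]
        gcongr
        have := Real.add_one_le_exp (1 * ‖y‖)
        linarith
    refine ⟨hmeas, hIntg, fun x => ?_⟩
    have hexp : ∀ x : E, AEStronglyMeasurable (fun y : E => Real.exp (inner ℝ x y)) μ := fun x =>
      (by fun_prop : Continuous fun y : E => Real.exp (inner ℝ x y)).aestronglyMeasurable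
    refine hasFDerivAt_integral_of_dominated_of_fderiv_le
      (F := fun (x : E) (y : E) => Real.exp (inner ℝ x y) • f y)
      (F' := fun (x : E) (y : E) => Real.exp (inner ℝ x y) • (innerSL ℝ y).smulRight (f y))
      (bound := fun y => Real.exp ((‖x‖ + 1) * ‖y‖) * ‖(innerSL ℝ y).smulRight (f y)‖)
      (s := Metric.ball x 1) (𝕜 := ℝ) (Metric.ball_mem_nhds x one_pos) ?_ ?_ ?_ ?_ ?_ ?_
    · exact .of_forall fun x => (hexp x).smul hf
    · refine (hR ‖x‖).mono' ((hexp x).smul hf) (.of_forall fun y => ?_)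
      exact laplace_norm_bound _ _ _ _ le_rfl
    · exact (hexp x).smul hmeas
    · refine .of_forall fun y z hz => laplace_norm_bound (F := E →L[ℝ] F) (‖x‖ + 1) z y
        ((innerSL ℝ y).smulRight (f y)) ?_
      have : ‖z - x‖ < 1 := by simpa [dist_eq_norm] using hz
      have := norm_le_norm_add_norm_sub' z x
      linarith [norm_sub_rev x z]
    · exact hIntg _
    · refine .of_forall fun y z _ => ?_
      have h1 : HasFDerivAt (fun z : E => inner ℝ z y) (innerSL ℝ y) z := by
        have : HasFDerivAt (fun z : E => innerSL ℝ y z) (innerSL ℝ y) z :=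
          (innerSL ℝ y).hasFDerivAt
        refine this.congr_of_eventuallyEq (.of_forall fun w => ?_)
        simp [real_inner_comm]
      have h2 := (h1.exp).smul_const (f y)
      refine h2.congr_fderiv ?_
      ext w
      simp [smul_smul]
  induction m with
  | zero =>
    intro F _ _ f hf hR
    have := (key f hf hR).2.2
    exact contDiff_zero.2 (continuous_iff_continuousAt.2 fun x => (this x).continuousAt)
  | succ m ih =>
    intro F _ _ f hf hR
    obtain ⟨h1, h2, h3⟩ := key f hf hR
    rw [Nat.cast_add, Nat.cast_one, contDiff_succ_iff_hasFDerivAt]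
    exact ⟨_, ih _ h1 h2, h3⟩

/-! ### Second derivative bounds from second differences -/

lemma second_diff_real {φ φ' : ℝ → ℝ} {a c : ℝ} (h1 : ∀ t, HasDerivAt φ (φ' t) t)
    (h2 : HasDerivAt φ' a 0) (H : ∀ t, c * t ^ 2 ≤ φ t + φ (-t) - 2 * φ 0) : c ≤ a := by
  by_contra hcon
  push Not at hcon
  have hn : ∀ t, HasDerivAt (fun t => φ (-t)) (-φ' (-t)) t := fun t => by
    simpa [Function.comp_def] using (h1 (-t)).comp t (hasDerivAt_neg t)
  have hk : ∀ t, HasDerivAt (fun t => φ t + φ (-t) - c * t ^ 2)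
      (φ' t + -φ' (-t) - c * (2 * t)) t := fun t => by
    refine ((h1 t).add (hn t)).sub ?_
    simpa using ((hasDerivAt_pow 2 t).const_mul c)
  have hd : deriv (fun t => φ t + φ (-t) - c * t ^ 2)
      = fun t => φ' t + -φ' (-t) - c * (2 * t) := funext fun t => (hk t).deriv
  have hn' : HasDerivAt (fun t => φ' (-t)) (-a) 0 := by
    have h2' : HasDerivAt φ' a (-0) := by simpa using h2
    simpa [Function.comp_def] using h2'.comp (0:ℝ) (hasDerivAt_neg 0)
  have hk2 : HasDerivAt (fun t => φ' t + -φ' (-t) - c * (2 * t)) (a + -(-a) - c * (2 * 1)) 0 :=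
    (h2.add hn'.neg).sub (((hasDerivAt_id (0:ℝ)).const_mul 2).const_mul c)
  have hmax : IsLocalMax (fun t => φ t + φ (-t) - c * t ^ 2) 0 := by
    refine isLocalMax_of_deriv_deriv_neg ?_ ?_ (hk 0).continuousAt
    · rw [hd, hk2.deriv]; linarith
    · rw [hd]; simp
  have hconst : (fun t => φ t + φ (-t) - c * t ^ 2) =ᶠ[nhds 0] fun _ => 2 * φ 0 := by
    filter_upwards [hmax] with t ht
    have := H t
    simp only [neg_zero] at ht
    apply le_antisymm <;> linarith
  have hz := (hconst.deriv).deriv_eq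
  rw [hd, hk2.deriv] at hz
  simp at hz
  linarith

lemma second_diff_lower {E : Type} [NormedAddCommGroup E] [NormedSpace ℝ E] {ψ : E → ℝ}
    (hψ : ContDiff ℝ 2 ψ) (c : ℝ) (x v : E)
    (H : ∀ w, c * ‖w‖ ^ 2 ≤ ψ (x + w) + ψ (x - w) - 2 * ψ x) :
    c * ‖v‖ ^ 2 ≤ iteratedFDeriv ℝ 2 ψ x ![v, v] := by
  rw [iteratedFDeriv_two_apply]
  simp only [Matrix.cons_val_zero, Matrix.cons_val_one]
  have hl : ∀ t : ℝ, HasDerivAt (fun t : ℝ => x + t • v) v t := fun t => by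
    simpa using ((hasDerivAt_id t).smul_const v).const_add x
  have hd1 : Differentiable ℝ ψ := hψ.differentiable (by norm_num)
  have hd2 : Differentiable ℝ (fderiv ℝ ψ) :=
    (hψ.fderiv_right (m := 1) (by norm_num)).differentiable (by norm_num)
  refine second_diff_real (φ := fun t => ψ (x + t • v)) (φ' := fun t => fderiv ℝ ψ (x + t • v) v)
    ?_ ?_ ?_
  · intro t
    exact (hd1 _).hasFDerivAt.comp_hasDerivAt t (hl t)
  · have h0 : HasFDerivAt (fderiv ℝ ψ) (fderiv ℝ (fderiv ℝ ψ) x) (x + (0:ℝ) • v) := by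
      simpa using (hd2 x).hasFDerivAt
    have := h0.comp_hasDerivAt (0:ℝ) (hl 0)
    simpa using this.clm_apply (hasDerivAt_const (0:ℝ) v)
  · intro t
    have := H (t • v)
    rw [norm_smul, mul_pow, Real.norm_eq_abs, sq_abs] at this
    simp only [neg_smul, zero_smul, add_zero, ← sub_eq_add_neg]
    linarith

lemma second_diff_upper {E : Type} [NormedAddCommGroup E] [NormedSpace ℝ E] {ψ : E → ℝ}
    (hψ : ContDiff ℝ 2 ψ) (c : ℝ) (x v : E)
    (H : ∀ w, ψ (x + w) + ψ (x - w) - 2 * ψ x ≤ c * ‖w‖ ^ 2) :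
    iteratedFDeriv ℝ 2 ψ x ![v, v] ≤ c * ‖v‖ ^ 2 := by
  have := second_diff_lower (ψ := -ψ) hψ.neg (-c) x v (fun w => by
    have := H w
    simp only [Pi.neg_apply]
    linarith)
  rw [iteratedFDeriv_neg] at this
  simp only [neg_apply, Pi.neg_apply] at this
  linarith

/-! ### The Gaussian convolution -/

section conv

variable {n : ℕ} {ρ : Euc n → ℝ} {δ : ℝ}

lemma gauss_pos (hδ0 : 0 < δ) (x : Euc n) : 0 < gaussDensity n δ x := by
  unfold gaussDensity
  positivity

lemma gauss_le (hδ0 : 0 < δ) (x : Euc n) : gaussDensity n δ x ≤ gaussDensity n δ 0 := by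
  unfold gaussDensity
  gcongr
  simp

lemma gauss_cont : Continuous (gaussDensity n δ) := by
  unfold gaussDensity
  fun_prop

lemma gauss_mul (hδ0 : 0 < δ) (x v : Euc n) :
    gaussDensity n δ (x + v) * gaussDensity n δ (x - v)
      = gaussDensity n δ x ^ 2 * Real.exp (-(‖v‖ ^ 2 / δ)) := by
  unfold gaussDensity
  generalize (2 * π * δ) ^ (-(n : ℝ) / 2) = k
  rw [mul_mul_mul_comm, ← sq, ← Real.exp_add, mul_pow, ← Real.exp_nat_mul, mul_assoc,
    ← Real.exp_add]
  congr 2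
  have := parallelogram_law_with_norm ℝ x v
  field_simp
  push_cast
  linarith

lemma conv_integrable (hδ0 : 0 < δ) (hρi : Integrable ρ) (x : Euc n) :
    Integrable (fun y => ρ y * gaussDensity n δ (x - y)) := by
  refine hρi.mul_bdd (c := gaussDensity n δ 0) ?_ (.of_forall fun y => ?_)
  · exact (gauss_cont.comp (by fun_prop)).aestronglyMeasurable
  · rw [Real.norm_of_nonneg (gauss_pos hδ0 _).le]
    exact gauss_le hδ0 _

lemma conv_pos (hδ0 : 0 < δ) (hρ0 : ∀ x, 0 ≤ ρ x) (hρ1 : (∫ x, ρ x) = 1) (x : Euc n) :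
    0 < ∫ y, ρ y * gaussDensity n δ (x - y) := by
  have hρi := integrable_of_integral_eq_one hρ1
  have h1 : 0 < ∫ y, ρ y := by rw [hρ1]; norm_num
  rw [integral_pos_iff_support_of_nonneg hρ0 hρi] at h1
  rw [integral_pos_iff_support_of_nonneg
    (fun y => mul_nonneg (hρ0 y) (gauss_pos hδ0 _).le) (conv_integrable hδ0 hρi x)]
  convert h1 using 2
  ext y
  simp [(gauss_pos hδ0 (x - y)).ne']

lemma conv_contDiff (hδ0 : 0 < δ) (hρm : Measurable ρ) (hρi : Integrable ρ) :
    ContDiff ℝ (⊤ : ℕ∞) (fun x : Euc n => ∫ y, ρ y * gaussDensity n δ (x - y)) := by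
  have hg : ContDiff ℝ (⊤ : ℕ∞) (fun x : Euc n => ∫ y : Euc n,
      Real.exp (inner ℝ x y) • (ρ y * gaussDensity n δ y)) := by
    rw [contDiff_infty]
    intro m
    refine laplace_contDiff_nat volume m _ ?_ ?_
    · exact (hρm.mul gauss_cont.measurable).aestronglyMeasurable
    · intro R
      refine (hρi.norm.const_mul ((2 * π * δ) ^ (-(n : ℝ) / 2) * Real.exp (R ^ 2 * δ / 2))).mono'
        ?_ (.of_forall fun y => ?_)
      · have h1 : Measurable fun y : Euc n => Real.exp (R * ‖y‖) := by fun_prop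
        exact (h1.mul (hρm.mul gauss_cont.measurable).norm).aestronglyMeasurable
      · rw [Real.norm_of_nonneg (by positivity), norm_mul, Real.norm_of_nonneg (gauss_pos hδ0 y).le]
        unfold gaussDensity
        have : Real.exp (R * ‖y‖) * Real.exp (-‖y‖ ^ 2 / (2 * δ)) ≤ Real.exp (R ^ 2 * δ / 2) := by
          rw [← Real.exp_add]
          gcongr
          have h2 : R ^ 2 * δ / 2 - (R * ‖y‖ + -‖y‖ ^ 2 / (2 * δ))
              = (R * δ - ‖y‖) ^ 2 / (2 * δ) := by
            field_simp
            ring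
          have h3 : 0 ≤ (R * δ - ‖y‖) ^ 2 / (2 * δ) := by positivity
          linarith
        calc _ = (2 * π * δ) ^ (-(n : ℝ) / 2) * (Real.exp (R * ‖y‖)
              * Real.exp (-‖y‖ ^ 2 / (2 * δ))) * ‖ρ y‖ := by ring
          _ ≤ _ := by gcongr
  have heq : (fun x : Euc n => ∫ y, ρ y * gaussDensity n δ (x - y))
      = fun x => Real.exp (-‖x‖ ^ 2 / (2 * δ)) * ∫ y : Euc n,
      Real.exp (inner ℝ (δ⁻¹ • x) y) • (ρ y * gaussDensity n δ y) := by
    funext x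
    rw [← integral_const_mul]
    congr 1
    funext y
    unfold gaussDensity
    have : Real.exp (-‖x - y‖ ^ 2 / (2 * δ)) = Real.exp (-‖x‖ ^ 2 / (2 * δ))
        * Real.exp (inner ℝ (δ⁻¹ • x) y) * Real.exp (-‖y‖ ^ 2 / (2 * δ)) := by
      rw [← Real.exp_add, ← Real.exp_add, norm_sub_sq_real, real_inner_smul_left]
      congr 1
      field_simp
      ring
    rw [this, smul_eq_mul]
    ring
  rw [heq]
  refine ContDiff.mul ?_ (hg.comp (contDiff_const_smul δ⁻¹))
  exact (((contDiff_norm_sq ℝ).neg).div_const _).exp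

/-- Cauchy–Schwarz bound. -/
lemma conv_upper (hδ0 : 0 < δ) (hρ0 : ∀ x, 0 ≤ ρ x) (hρ1 : (∫ x, ρ x) = 1) (x v : Euc n) :
    (∫ y, ρ y * gaussDensity n δ (x - y)) ^ 2 ≤ Real.exp (‖v‖ ^ 2 / δ) *
      ((∫ y, ρ y * gaussDensity n δ (x + v - y)) * ∫ y, ρ y * gaussDensity n δ (x - v - y)) := by
  have hρi := integrable_of_integral_eq_one hρ1
  have hA := conv_pos hδ0 hρ0 hρ1 (x + v)
  have hB := conv_pos hδ0 hρ0 hρ1 (x - v)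
  have hC := conv_pos hδ0 hρ0 hρ1 x
  have iA := conv_integrable hδ0 hρi (x + v)
  have iB := conv_integrable hδ0 hρi (x - v)
  have iC := conv_integrable hδ0 hρi x
  -- pointwise AM-GM
  have hpt : ∀ a b : ℝ, 0 < a → 0 < b → a * b = 1 → ∀ y,
      2 * (ρ y * gaussDensity n δ (x - y)) ≤ Real.exp (‖v‖ ^ 2 / (2 * δ)) *
        (a * (ρ y * gaussDensity n δ (x + v - y)) + b * (ρ y * gaussDensity n δ (x - v - y))) := by
    intro a b ha hb hab y
    have h1 := gauss_mul hδ0 (x - y) v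
    rw [show x - y + v = x + v - y by abel, show x - y - v = x - v - y by abel] at h1
    set p := gaussDensity n δ (x + v - y)
    set q := gaussDensity n δ (x - v - y)
    set r := gaussDensity n δ (x - y)
    have hp : 0 < p := gauss_pos hδ0 _
    have hq : 0 < q := gauss_pos hδ0 _
    have hr : 0 < r := gauss_pos hδ0 _
    set e := Real.exp (‖v‖ ^ 2 / (2 * δ)) with he
    have hepos : 0 < e := Real.exp_pos _
    have he2 : e ^ 2 * Real.exp (-(‖v‖ ^ 2 / δ)) = 1 := by
      rw [he, ← Real.exp_nat_mul, ← Real.exp_add, Real.exp_eq_one_iff]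
      field_simp
      push_cast
      ring
    have h2 : r ^ 2 = e ^ 2 * (p * q) := by
      rw [h1]
      linear_combination (-r ^ 2) * he2
    have h3 : 2 * r ≤ e * (a * p + b * q) := by
      refine abs_le_of_sq_le_sq' ?_ (by positivity) |>.2
      have h4 : (2 * r) ^ 2 = e ^ 2 * (4 * ((a * b) * (p * q))) := by
        rw [hab, mul_pow, h2]; ring
      rw [h4, mul_pow]
      gcongr
      nlinarith [sq_nonneg (a * p - b * q)]
    calc _ = ρ y * (2 * r) := by ring
      _ ≤ ρ y * (e * (a * p + b * q)) := mul_le_mul_of_nonneg_left h3 (hρ0 y)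
      _ = _ := by ring
  set A := ∫ y, ρ y * gaussDensity n δ (x + v - y)
  set B := ∫ y, ρ y * gaussDensity n δ (x - v - y)
  set C := ∫ y, ρ y * gaussDensity n δ (x - y)
  have hIntg : ∀ a b : ℝ, 0 < a → 0 < b → a * b = 1 →
      2 * C ≤ Real.exp (‖v‖ ^ 2 / (2 * δ)) * (a * A + b * B) := by
    intro a b ha hb hab
    have := integral_mono (iC.const_mul 2)
      (((iA.const_mul a).add (iB.const_mul b)).const_mul (Real.exp (‖v‖ ^ 2 / (2 * δ))))
      (hpt a b ha hb hab)
    simp only [integral_const_mul, Pi.add_apply] at this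
    rw [integral_add (iA.const_mul a) (iB.const_mul b), integral_const_mul, integral_const_mul]
      at this
    exact this
  have hsA : 0 < √A := Real.sqrt_pos.2 hA
  have hsB : 0 < √B := Real.sqrt_pos.2 hB
  have h := hIntg (√B / √A) (√A / √B) (by positivity) (by positivity) (by field_simp)
  have h5 : √B / √A * A + √A / √B * B = 2 * (√A * √B) := by
    have e1 : √A * √A = A := Real.mul_self_sqrt hA.le
    have e2 : √B * √B = B := Real.mul_self_sqrt hB.le
    have : √B / √A * (√A * √A) + √A / √B * (√B * √B) = 2 * (√A * √B) := by
      field_simp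
      ring
    rwa [e1, e2] at this
  rw [h5] at h
  have h6 : C ≤ Real.exp (‖v‖ ^ 2 / (2 * δ)) * (√A * √B) := by linarith
  calc C ^ 2 ≤ (Real.exp (‖v‖ ^ 2 / (2 * δ)) * (√A * √B)) ^ 2 := by gcongr
    _ = Real.exp (‖v‖ ^ 2 / δ) * (A * B) := by
      rw [mul_pow, mul_pow, Real.sq_sqrt hA.le, Real.sq_sqrt hB.le, ← Real.exp_nat_mul]
      congr 2
      field_simp
      push_cast
      ring

/-- Midpoint log-concavity of the convolution, from Prékopa–Leindler. -/
lemma conv_lower (hδ0 : 0 < δ) (hρm : Measurable ρ) (hlc : IsLogConcaveFun ρ)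
    (hρ1 : (∫ x, ρ x) = 1) (x v : Euc n) :
    (∫ y, ρ y * gaussDensity n δ (x + v - y)) * (∫ y, ρ y * gaussDensity n δ (x - v - y))
      ≤ (∫ y, ρ y * gaussDensity n δ (x - y)) ^ 2 := by
  have hρi := integrable_of_integral_eq_one hρ1
  have hρ0 := hlc.1
  have hnn : ∀ z y : Euc n, 0 ≤ ρ y * gaussDensity n δ (z - y) := fun z y =>
    mul_nonneg (hρ0 y) (gauss_pos hδ0 _).le
  have hl : ∀ z : Euc n, ENNReal.ofReal (∫ y, ρ y * gaussDensity n δ (z - y))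
      = ∫⁻ y, ENNReal.ofReal (ρ y * gaussDensity n δ (z - y)) := fun z =>
    ofReal_integral_eq_lintegral_ofReal (conv_integrable hδ0 hρi z) (.of_forall (hnn z))
  have hm : ∀ z : Euc n,
      Measurable fun y => ENNReal.ofReal (ρ y * gaussDensity n δ (z - y)) := fun z =>
    (hρm.mul ((gauss_cont (n := n) (δ := δ)).comp (by fun_prop : Continuous fun y => z - y)).measurable).ennreal_ofReal
  have hA := conv_pos hδ0 hρ0 hρ1 (x + v)
  have hC := conv_pos hδ0 hρ0 hρ1 x
  have key := pl_euc n _ _ _ (hm (x + v)) (hm (x - v)) (hm x) (by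
    intro y z
    rw [← ENNReal.ofReal_mul (hnn _ _), ← ENNReal.ofReal_pow (hnn _ _)]
    refine ENNReal.ofReal_le_ofReal ?_
    have h1 : ρ y * ρ z ≤ ρ ((2:ℝ)⁻¹ • (y + z)) ^ 2 := by
      have := hlc.2 y z 2⁻¹ 2⁻¹ (by norm_num) (by norm_num) (by norm_num)
      rw [← smul_add] at this
      have h2 : (ρ y ^ (2⁻¹:ℝ) * ρ z ^ (2⁻¹:ℝ)) ^ 2 ≤ ρ ((2:ℝ)⁻¹ • (y + z)) ^ 2 := by
        have a1 := Real.rpow_nonneg (hρ0 y) 2⁻¹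
        have a2 := Real.rpow_nonneg (hρ0 z) 2⁻¹
        gcongr
      rw [mul_pow, ← Real.rpow_mul_natCast (hρ0 y), ← Real.rpow_mul_natCast (hρ0 z)] at h2
      simpa using h2
    have h3 : gaussDensity n δ (x + v - y) * gaussDensity n δ (x - v - z)
        ≤ gaussDensity n δ (x - (2:ℝ)⁻¹ • (y + z)) ^ 2 := by
      have h4 := gauss_mul hδ0 (x - (2:ℝ)⁻¹ • (y + z)) (v - (2:ℝ)⁻¹ • (y - z))
      have e1 : x - (2:ℝ)⁻¹ • (y + z) + (v - (2:ℝ)⁻¹ • (y - z)) = x + v - y := by module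
      have e2 : x - (2:ℝ)⁻¹ • (y + z) - (v - (2:ℝ)⁻¹ • (y - z)) = x - v - z := by module
      rw [e1, e2] at h4
      rw [h4]
      refine mul_le_of_le_one_right (by positivity) ?_
      rw [Real.exp_le_one_iff]
      have : 0 ≤ ‖v - (2:ℝ)⁻¹ • (y - z)‖ ^ 2 / δ := by positivity
      linarith
    calc _ = (ρ y * ρ z) * (gaussDensity n δ (x + v - y) * gaussDensity n δ (x - v - z)) := by ring
      _ ≤ ρ ((2:ℝ)⁻¹ • (y + z)) ^ 2 * gaussDensity n δ (x - (2:ℝ)⁻¹ • (y + z)) ^ 2 := by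
        refine mul_le_mul h1 h3 ?_ (by positivity)
        exact mul_nonneg (gauss_pos hδ0 _).le (gauss_pos hδ0 _).le
      _ = _ := by ring)
  rw [← hl, ← hl, ← hl, ← ENNReal.ofReal_mul hA.le, ← ENNReal.ofReal_pow hC.le,
    ENNReal.ofReal_le_ofReal_iff (by positivity)] at key
  exact key

lemma conv_Z_pos (hδ0 : 0 < δ) (hρm : Measurable ρ) (hρ0 : ∀ x, 0 ≤ ρ x)
    (hρ1 : (∫ x, ρ x) = 1) :
    0 < ∫ x : Euc n, (∫ y, ρ y * gaussDensity n δ (x - y)) * Real.exp (-δ * ‖x‖ ^ 2 / 2) := by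
  have hρi := integrable_of_integral_eq_one hρ1
  have hpos := conv_pos hδ0 hρ0 hρ1
  have hexp : Integrable (fun x : Euc n => Real.exp (-δ * ‖x‖ ^ 2 / 2)) := by
    have := (GaussianFourier.integrable_cexp_neg_mul_sq_norm_add (V := Euc n) (b := ((δ / 2 : ℝ) : ℂ))
      (by simpa using hδ0) 0 0).norm
    refine this.congr (.of_forall fun x => ?_)
    simp only [Complex.norm_exp]
    congr 1
    simp
    norm_cast
    ring
  have hIntg : Integrable fun x : Euc n =>
      (∫ y, ρ y * gaussDensity n δ (x - y)) * Real.exp (-δ * ‖x‖ ^ 2 / 2) := by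
    refine hexp.bdd_mul (c := gaussDensity n δ 0)
      (conv_contDiff hδ0 hρm hρi).continuous.aestronglyMeasurable (.of_forall fun x => ?_)
    rw [Real.norm_of_nonneg (hpos x).le]
    calc _ ≤ ∫ y, ρ y * gaussDensity n δ 0 :=
          integral_mono (conv_integrable hδ0 hρi x) (hρi.mul_const _)
            fun y => mul_le_mul_of_nonneg_left (gauss_le hδ0 _) (hρ0 y)
      _ = _ := by rw [integral_mul_const, hρ1, one_mul]
  rw [integral_pos_iff_support_of_nonneg (fun x => by have := hpos x; positivity) hIntg]
  have : (Function.support fun x : Euc n =>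
      (∫ y, ρ y * gaussDensity n δ (x - y)) * Real.exp (-δ * ‖x‖ ^ 2 / 2)) = Set.univ := by
    ext x
    simp only [Function.mem_support, Set.mem_univ, iff_true]
    have := hpos x
    positivity
  rw [this]
  exact NeZero.pos (volume Set.univ)

end conv

/-- Regularization of a log-concave density: the density proportional to
`(ρ * γ_δ)(x) e^{−δ|x|²/2}` is smooth and positive, and its potential `ψ_δ`
satisfies `δ·Id ≤ ∇²ψ_δ ≤ (δ + 1/δ)·Id`. -/
theorem regularized_density_hessian_bounds {n : ℕ} (ρ : Euc n → ℝ) (hρm : Measurable ρ)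
    (hlc : IsLogConcaveFun ρ) (hρ1 : (∫ x, ρ x) = 1)
    (δ : ℝ) (hδ0 : 0 < δ) (hδ1 : δ < 1)
    (Z : ℝ)
    (hZ : Z = ∫ x, (∫ y, ρ y * gaussDensity n δ (x - y)) * Real.exp (-δ * ‖x‖ ^ 2 / 2))
    (d : Euc n → ℝ)
    (hd : d = fun x =>
      (∫ y, ρ y * gaussDensity n δ (x - y)) * Real.exp (-δ * ‖x‖ ^ 2 / 2) / Z)
    (ψδ : Euc n → ℝ) (hψδ : ψδ = fun x => -Real.log (d x)) :
    ContDiff ℝ (⊤ : ℕ∞) d ∧ (∀ x, 0 < d x) ∧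
    ∀ x v : Euc n,
      δ * ‖v‖ ^ 2 ≤ iteratedFDeriv ℝ 2 ψδ x ![v, v] ∧
      iteratedFDeriv ℝ 2 ψδ x ![v, v] ≤ (δ + 1 / δ) * ‖v‖ ^ 2 := by
  have hρi := integrable_of_integral_eq_one hρ1
  have hρ0 := hlc.1
  have hZp : 0 < Z := by rw [hZ]; exact conv_Z_pos hδ0 hρm hρ0 hρ1
  have hu := conv_contDiff hδ0 hρm hρi
  have hup := conv_pos hδ0 hρ0 hρ1
  have hlow := conv_lower hδ0 hρm hlc hρ1
  have hupp := conv_upper hδ0 hρ0 hρ1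
  set u : Euc n → ℝ := fun x => ∫ y, ρ y * gaussDensity n δ (x - y) with hudef
  have hup' : ∀ x, 0 < u x := hup
  have hdsm : ContDiff ℝ (⊤ : ℕ∞) d := by
    rw [hd]
    refine (hu.mul ?_).div_const _
    exact ((contDiff_const.mul (contDiff_norm_sq ℝ)).div_const _).exp
  have hdp : ∀ x, 0 < d x := fun x => by
    have := hup' x
    rw [hd]
    positivity
  have hψsm : ContDiff ℝ 2 ψδ := by
    rw [hψδ]
    exact (ContDiff.log (contDiff_infty.1 hdsm 2) fun x => (hdp x).ne').neg
  have hψ : ∀ x, ψδ x = -Real.log (u x) + δ * ‖x‖ ^ 2 / 2 + Real.log Z := fun x => by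
    have h1 : d x = u x * Real.exp (-δ * ‖x‖ ^ 2 / 2) / Z := by rw [hd]
    rw [hψδ]
    simp only
    rw [h1, Real.log_div (mul_ne_zero (hup' x).ne' (Real.exp_pos _).ne') hZp.ne',
      Real.log_mul (hup' x).ne' (Real.exp_pos _).ne', Real.log_exp]
    ring
  refine ⟨hdsm, hdp, fun x v => ⟨second_diff_lower hψsm δ x v fun w => ?_,
    second_diff_upper hψsm _ x v fun w => ?_⟩⟩
  · have h1 : u (x + w) * u (x - w) ≤ u x ^ 2 := hlow x w
    have h2 := Real.log_le_log (mul_pos (hup' _) (hup' _)) h1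
    rw [Real.log_mul (hup' _).ne' (hup' _).ne', Real.log_pow] at h2
    rw [hψ, hψ, hψ]
    have := parallelogram_law_with_norm ℝ x w
    push_cast at h2
    nlinarith
  · have h1 : u x ^ 2 ≤ Real.exp (‖w‖ ^ 2 / δ) * (u (x + w) * u (x - w)) := hupp x w
    have h2 := Real.log_le_log (pow_pos (hup' _) 2) h1
    rw [Real.log_mul (Real.exp_pos _).ne' (mul_pos (hup' _) (hup' _)).ne',
      Real.log_mul (hup' _).ne' (hup' _).ne', Real.log_pow, Real.log_exp] at h2
    rw [hψ, hψ, hψ, add_mul]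
    have := parallelogram_law_with_norm ℝ x w
    push_cast at h2
    have e : 1 / δ * ‖w‖ ^ 2 = ‖w‖ ^ 2 / δ := by ring
    rw [e]
    nlinarith
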